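/- Let r be a 3-vector of the 𝒪-lattice Λ⁴ and let U(Λ⁴)_r := {g ∈ U(Λ⁴) : g(r) = r}. Then for every c ∈ 𝒪, the group U(Λ⁴)_r acts transitively on the set of 3-vectors r' of Λ⁴ with ψ(r', r) = c. -/

import Mathlib

open Polynomial

noncomputable section

/-- The Eisenstein ring `𝒪 = ℤ[ω]`, where `ω = e^{2πi/6}` is a primitive sixth root of
unity (so `ω² - ω + 1 = 0`), presented as `ℤ[X]/(X² - X + 1)`. -/
abbrev O : Type := AdjoinRoot (X ^ 2 - X + 1 : ℤ[X])

/-- `ω`, the distinguished primitive sixth root of unity in `𝒪`. -/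
def ω : O := AdjoinRoot.root _

lemma ω_sq : ω ^ 2 - ω + 1 = 0 := by
  have h := AdjoinRoot.eval₂_root (X ^ 2 - X + 1 : ℤ[X])
  simpa [ω, eval₂_add, eval₂_sub, eval₂_pow, eval₂_X, eval₂_one] using h

/-- Complex conjugation on the Eisenstein ring: the ring involution with
`conj ω = 1 - ω = ω⁻¹`. -/
def conj : O →+* O :=
  AdjoinRoot.lift (algebraMap ℤ O) (1 - ω) (by
    have h := ω_sq
    simp only [eval₂_add, eval₂_sub, eval₂_pow, eval₂_X, eval₂_one]
    ring_nf
    ring_nf at h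
    linear_combination h)

/-- `θ := ω - ω⁻¹ = ω - conj ω = 2ω - 1`, a square root of `-3` in `𝒪`. -/
def θ : O := ω - conj ω

/-- The Gram matrix of the 𝒪-lattice `Λᵏ` on its basis `r₁,…,r_k`:
`ψ(rᵢ,rᵢ) = 3`, `ψ(rᵢ,rᵢ₊₁) = θ`, `ψ(rᵢ,rⱼ) = 0` for `j > i+1`, and Hermitian symmetry
(`ψ(rᵢ₊₁,rᵢ) = conj θ`). -/
def gram (k : ℕ) : Fin k → Fin k → O := fun i j =>
  if i = j then 3
  else if (i : ℕ) + 1 = (j : ℕ) then θ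
  else if (j : ℕ) + 1 = (i : ℕ) then conj θ
  else 0

/-- The Hermitian form of `Λᵏ`, modelled on `Fin k → 𝒪` (coordinates with respect to the
basis `r₁,…,r_k`): 𝒪-linear in the first variable, conjugate-linear in the second. -/
def psi (k : ℕ) (x y : Fin k → O) : O :=
  ∑ i : Fin k, ∑ j : Fin k, x i * conj (y j) * gram k i j

/-- `g` belongs to the unitary group `U(Λᵏ)`: an 𝒪-module automorphism of `Λᵏ`
preserving the Hermitian form `ψ`. -/
def IsUnitary (k : ℕ) (g : (Fin k → O) ≃ₗ[O] (Fin k → O)) : Prop :=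
  ∀ x y, psi k (g x) (g y) = psi k x y

/-- The basis vector `rᵢ` of `Λᵏ` (indexing from `0`, so `r k i` is `r_{i+1}`). -/
def r (k : ℕ) (i : Fin k) : Fin k → O := Pi.single i 1

/-!
Every value of `ψ` is divisible by `θ`, so `ψ = θφ` with `φ` skew-Hermitian, and modulo `θ` the form
`φ` becomes a nondegenerate alternating form `B` on `𝔽₃⁴`. A 3-vector (root) `t` gives unitary
transvections `x ↦ x + e φ(x, t) t`, whose reductions are the symplectic transvections along the
class of `t`. By positive definiteness, roots that are congruent modulo `θ` differ by a unit, and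
roots that are orthogonal modulo `θ` are orthogonal or differ by a unit; so questions about roots
pass to their classes in `𝔽₃⁴`, every nonzero one of which contains a root. If `x` and `x'` have
the same product with `x₀` and are not multiples of it, some class `w` can be reached from those of
`x` and of `x'` by transvections fixing `x₀`. The images of `x` and `x'` are then congruent
modulo `θ`, and a last transvection makes them equal.
-/

namespace EisensteinLattice

section EisensteinIntegers

lemma ω_mul_ω : ω * ω = ω - 1 := by linear_combination ω_sq

lemma conj_ω : conj ω = 1 - ω := by simp [conj, ω]

lemma θ_eq : θ = 2 * ω - 1 := by rw [θ, conj_ω]; ring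

lemma θ_mul_θ : θ * θ = -3 := by rw [θ_eq]; linear_combination 4 * ω_mul_ω

lemma conj_θ : conj θ = -θ := by
  rw [θ_eq, map_sub, map_mul, map_ofNat, map_one, conj_ω]; ring

lemma exists_eq_intCast_add_mul_ω (a : O) : ∃ m n : ℤ, a = m + n * ω := by
  have ha : a ∈ Algebra.adjoin ℤ {ω} := by
    rw [ω, AdjoinRoot.adjoinRoot_eq_top]; trivial
  induction ha using Algebra.adjoin_induction with
  | mem x hx => exact ⟨0, 1, by simpa using hx⟩
  | algebraMap k => exact ⟨k, 0, by simp⟩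
  | add x y _ _ hx hy =>
    obtain ⟨⟨m, n, rfl⟩, ⟨m', n', rfl⟩⟩ := hx, hy
    exact ⟨m + m', n + n', by push_cast; ring⟩
  | mul x y _ _ hx hy =>
    obtain ⟨⟨m, n, rfl⟩, ⟨m', n', rfl⟩⟩ := hx, hy
    refine ⟨m * m' - n * n', m * n' + n * m' + n * n', ?_⟩
    push_cast
    linear_combination (n * n' : O) * ω_mul_ω

lemma conj_conj (a : O) : conj (conj a) = a := by
  obtain ⟨m, n, rfl⟩ := exists_eq_intCast_add_mul_ω a
  simp [conj_ω]

/-- Coordinates with respect to `1, ω`, as a ring homomorphism to Mathlib's model of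
`ℤ[X]/(X² - X + 1)`, in which equality and norms can be computed. -/
def toQuadratic : O →+* QuadraticAlgebra ℤ (-1) 1 :=
  AdjoinRoot.lift (algebraMap ℤ _) QuadraticAlgebra.omega (by
    ext <;> simp [pow_two, QuadraticAlgebra.re_one, QuadraticAlgebra.im_one])

lemma toQuadratic_intCast_add_mul_ω (m n : ℤ) : toQuadratic (m + n * ω) = ⟨m, n⟩ := by
  ext <;> simp [toQuadratic, ω]

instance : CharZero O :=
  toQuadratic.charZero

/-- The norm `|a|²` of an Eisenstein integer. -/
def norm : O →* ℤ :=
  QuadraticAlgebra.norm.comp (toQuadratic : O →* QuadraticAlgebra ℤ (-1) 1)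

lemma norm_intCast_add_mul_ω (m n : ℤ) : norm (m + n * ω) = m * m + m * n + n * n := by
  change (toQuadratic _).norm = _
  rw [toQuadratic_intCast_add_mul_ω, QuadraticAlgebra.norm_def]
  ring

lemma mul_conj (a : O) : a * conj a = norm a := by
  obtain ⟨m, n, rfl⟩ := exists_eq_intCast_add_mul_ω a
  rw [norm_intCast_add_mul_ω, map_add, map_mul, map_intCast, map_intCast, conj_ω]
  push_cast
  linear_combination (-n * n : O) * ω_mul_ω

lemma norm_nonneg (a : O) : 0 ≤ norm a := by
  obtain ⟨m, n, rfl⟩ := exists_eq_intCast_add_mul_ω a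
  rw [norm_intCast_add_mul_ω]
  nlinarith [sq_nonneg (m + n), sq_nonneg m, sq_nonneg n]

lemma norm_eq_zero {a : O} : norm a = 0 ↔ a = 0 := by
  refine ⟨fun h => ?_, fun h => by simp [h, norm]⟩
  obtain ⟨m, n, rfl⟩ := exists_eq_intCast_add_mul_ω a
  rw [norm_intCast_add_mul_ω] at h
  have hm : m = 0 := by nlinarith [sq_nonneg (m + 2 * n), sq_nonneg m]
  have hn : n = 0 := by nlinarith [sq_nonneg (2 * m + n), sq_nonneg n]
  simp [hm, hn]

instance : IsDomain O :=
  have : NoZeroDivisors O := ⟨fun {a b} h => by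
    rw [← norm_eq_zero (a := a), ← norm_eq_zero (a := b), ← mul_eq_zero, ← map_mul, h,
      norm_eq_zero]⟩
  NoZeroDivisors.to_isDomain O

lemma θ_ne_zero : θ ≠ 0 := by
  intro h
  simpa [h] using θ_mul_θ

/-- Reduction modulo `θ`. -/
def red : O →+* ZMod 3 :=
  AdjoinRoot.lift (Int.castRingHom (ZMod 3)) (-1) (by
    simp only [eval₂_add, eval₂_sub, eval₂_pow, eval₂_X, eval₂_one]
    decide)

lemma red_ω : red ω = -1 := by simp [red, ω]

lemma red_θ : red θ = 0 := by
  rw [θ_eq, map_sub, map_mul, map_ofNat, map_one, red_ω]; decide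

lemma red_eq_zero_iff {a : O} : red a = 0 ↔ θ ∣ a := by
  refine ⟨fun h => ?_, fun ⟨b, hb⟩ => by rw [hb, map_mul, red_θ, zero_mul]⟩
  obtain ⟨m, n, rfl⟩ := exists_eq_intCast_add_mul_ω a
  have hmn : ((m - n : ℤ) : ZMod 3) = 0 := by
    simp only [map_add, map_mul, map_intCast, red_ω] at h
    push_cast
    linear_combination h
  obtain ⟨k, hk⟩ := (ZMod.intCast_zmod_eq_zero_iff_dvd _ 3).mp hmn
  obtain rfl : m = n + 3 * k := by push_cast at hk; linarith
  refine ⟨n * (1 - ω) - k * θ, ?_⟩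
  push_cast
  rw [θ_eq]
  linear_combination (2 * n + 4 * k : O) * ω_mul_ω

lemma red_conj (a : O) : red (conj a) = red a := by
  obtain ⟨m, n, rfl⟩ := exists_eq_intCast_add_mul_ω a
  simp only [map_add, map_mul, map_intCast, conj_ω, map_sub, map_one, red_ω]
  linear_combination (n : ZMod 3) * (by decide : (3 : ZMod 3) = 0)

end EisensteinIntegers

/-- `e` is a coefficient for which the transvection `x ↦ x + (e * φ x t) • t` along a root `t` is
unitary. -/
def IsTransvectionCoeff (e : O) : Prop := conj e - e = θ * (e * conj e)

lemma exists_isTransvectionCoeff (ε : ZMod 3) : ∃ e, IsTransvectionCoeff e ∧ red e = ε := by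
  have hε : ε = 0 ∨ ε = 1 ∨ ε = -1 := by decide +revert
  rcases hε with rfl | rfl | rfl
  · exact ⟨0, by simp [IsTransvectionCoeff], map_zero red⟩
  · refine ⟨-ω, ?_, by rw [map_neg, red_ω, neg_neg]⟩
    rw [IsTransvectionCoeff, map_neg, conj_ω, θ_eq]
    linear_combination (2 * ω - 1) * ω_mul_ω
  · refine ⟨1 - ω, ?_, by rw [map_sub, map_one, red_ω]; decide⟩
    rw [IsTransvectionCoeff, map_sub, map_one, conj_ω, θ_eq]
    linear_combination (2 * ω - 1) * ω_mul_ω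

lemma exists_isTransvectionCoeff_of_mul_conj_eq_one {f : O} (hf : f * conj f = 1)
    (h : θ ∣ f - 1) : ∃ e, IsTransvectionCoeff e ∧ f = 1 - e * θ := by
  obtain ⟨c, hc⟩ := h
  obtain rfl : f = 1 - -c * θ := by linear_combination hc
  refine ⟨-c, mul_left_cancel₀ θ_ne_zero ?_, rfl⟩
  simp only [map_sub, map_one, map_mul, map_neg, conj_θ] at hf ⊢
  linear_combination hf

section SkewHermitian

variable {M : Type*} [AddCommGroup M] [Module O M] {φ : M →ₗ[O] M →ₛₗ[conj] O}

/-- A skew-Hermitian form `φ` such that the Hermitian form `ψ = θ * φ` is positive definite.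
Hermitian forms with values in `θ𝒪` are handled through `φ`, whose reduction modulo `θ` is
symplectic; since `-θ * θ = 3`, the condition on `φ x x` says `ψ(x, x) = 3n` with `n > 0`. -/
structure IsPosDef (φ : M →ₗ[O] M →ₛₗ[conj] O) : Prop where
  skew : ∀ x y, φ y x = -conj (φ x y)
  pos : ∀ x ≠ 0, ∃ n : ℤ, 0 < n ∧ φ x x = -θ * n

/-- The `3`-vectors of the Hermitian form `ψ = θ * φ`. -/
def IsRoot (φ : M →ₗ[O] M →ₛₗ[conj] O) (x : M) : Prop := φ x x = -θ

lemma red_eq_zero_of_apply_θ_smul_self {z : M} {c : O} (h : φ (θ • z) (θ • z) = -θ * c) :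
    red c = 0 := by
  rw [LinearMap.map_smul₂, LinearMap.map_smulₛₗ, smul_eq_mul, smul_eq_mul, conj_θ] at h
  rw [red_eq_zero_iff]
  exact ⟨φ z z, mul_left_cancel₀ θ_ne_zero (by linear_combination h)⟩

lemma IsRoot.ne_θ_smul {x : M} (hx : IsRoot φ x) (z : M) : x ≠ θ • z := by
  rintro rfl
  have h : red 1 = 0 := red_eq_zero_of_apply_θ_smul_self (hx.trans (mul_one _).symm)
  exact one_ne_zero ((map_one red).symm.trans h)

namespace IsPosDef

lemma eq_zero_or_eq_smul (hφ : IsPosDef φ) {x y : M} (hx : IsRoot φ x) (hy : IsRoot φ y)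
    (h : θ ∣ φ x y) : φ x y = 0 ∨ ∃ f, f * conj f = 1 ∧ x = f • y := by
  obtain ⟨c, hc⟩ := h
  obtain ⟨f, rfl⟩ : ∃ f, c = -f := ⟨-c, (neg_neg c).symm⟩
  have hyx : φ y x = -θ * conj f := by
    rw [hφ.skew x y, hc]; simp only [map_mul, map_neg, conj_θ]; ring
  have hsub : φ (x - f • y) (x - f • y) = -θ * (1 - norm f : ℤ) := by
    rw [LinearMap.map_sub₂, map_sub, map_sub, LinearMap.map_smul₂, LinearMap.map_smul₂,
      LinearMap.map_smulₛₗ, LinearMap.map_smulₛₗ, hyx, hc, hx, hy]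
    simp only [smul_eq_mul]
    push_cast
    linear_combination θ * mul_conj f
  by_cases hz : x - f • y = 0
  · rw [hz, map_zero, eq_comm, mul_eq_zero, or_iff_right (neg_ne_zero.mpr θ_ne_zero),
      Int.cast_eq_zero] at hsub
    exact .inr ⟨f, by rw [mul_conj, ← sub_eq_zero.mp hsub, Int.cast_one], sub_eq_zero.mp hz⟩
  · obtain ⟨n, hn, hn'⟩ := hφ.pos _ hz
    have hnf : 1 - norm f = n := Int.cast_injective
      (mul_left_cancel₀ (neg_ne_zero.mpr θ_ne_zero) (hsub.symm.trans hn'))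
    have hf : f = 0 := norm_eq_zero.mp (by linarith [norm_nonneg f])
    exact .inl (by rw [hc, hf, neg_zero, mul_zero])

lemma eq_smul_of_sub_eq_θ_smul (hφ : IsPosDef φ) {x y z : M} (hx : IsRoot φ x) (hy : IsRoot φ y)
    (h : y - x = θ • z) : ∃ f, f * conj f = 1 ∧ θ ∣ f - 1 ∧ y = f • x := by
  have hθ : θ ∣ φ y x := by
    refine ⟨φ z x - 1, ?_⟩
    rw [sub_eq_iff_eq_add'.mp h, LinearMap.map_add₂, LinearMap.map_smul₂, smul_eq_mul, hx]
    ring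
  rcases hφ.eq_zero_or_eq_smul hy hx hθ with hyx | ⟨f, hf, rfl⟩
  · have hxy : φ x y = 0 := by rw [hφ.skew y x, hyx, map_zero, neg_zero]
    have h2 : red 2 = 0 := red_eq_zero_of_apply_θ_smul_self (φ := φ) (z := z) <| by
      rw [← h, LinearMap.map_sub₂, map_sub, map_sub, hxy, hyx, hx, hy]
      ring
    exact absurd h2 (by rw [map_ofNat]; decide)
  · have hz : θ • z = (f - 1) • x := by rw [← h, sub_smul, one_smul]
    have hred : red ((f - 1) * conj (f - 1)) = 0 :=
      red_eq_zero_of_apply_θ_smul_self (φ := φ) (z := z) <| by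
        rw [hz, LinearMap.map_smul₂, LinearMap.map_smulₛₗ, smul_eq_mul, smul_eq_mul, hx]
        ring
    rw [map_mul, red_conj, mul_self_eq_zero, red_eq_zero_iff] at hred
    exact ⟨f, hf, hred, rfl⟩

end IsPosDef

/-- The group of isometries of `φ` that fix `x₀`. -/
def unitaryStabilizer (φ : M →ₗ[O] M →ₛₗ[conj] O) (x₀ : M) : Subgroup (M ≃ₗ[O] M) where
  carrier := {g | (∀ x y, φ (g x) (g y) = φ x y) ∧ g x₀ = x₀}
  one_mem' := ⟨fun _ _ => rfl, rfl⟩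
  mul_mem' {g h} hg hh :=
    ⟨fun x y => (hg.1 _ _).trans (hh.1 x y), (congrArg g hh.2).trans hg.2⟩
  inv_mem' {g} hg :=
    ⟨fun x y => by simpa using (hg.1 (g⁻¹ x) (g⁻¹ y)).symm,
      g.symm_apply_eq.mpr hg.2.symm⟩

lemma IsPosDef.add_smul_mem_orbit (hφ : IsPosDef φ) {x₀ t : M} (ht : IsRoot φ t)
    (hx₀ : φ x₀ t = 0) {e : O} (he : IsTransvectionCoeff e) (x : M) :
    x + (e * φ x t) • t ∈ MulAction.orbit (unitaryStabilizer φ x₀) x := by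
  rw [IsTransvectionCoeff] at he
  have hunit : IsUnit (1 + (e • φ.flip t) t) := by
    refine .of_mul_eq_one (1 + conj e * θ) ?_
    rw [LinearMap.smul_apply, LinearMap.flip_apply, ht, smul_eq_mul]
    linear_combination θ * he
  let g := LinearEquiv.dilatransvection hunit
  have hg (y : M) : g y = y + (e * φ y t) • t := LinearEquiv.dilatransvection.apply
  refine ⟨⟨g, fun y z => ?_, by rw [hg, hx₀, mul_zero, zero_smul, add_zero]⟩, hg x⟩
  rw [hg, hg, LinearMap.map_add₂, map_add, map_add, LinearMap.map_smul₂, LinearMap.map_smul₂,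
    LinearMap.map_smulₛₗ, LinearMap.map_smulₛₗ, hφ.skew z t, ht]
  simp only [smul_eq_mul, map_mul]
  linear_combination φ y t * conj (φ z t) * he

lemma IsRoot.of_mem_orbit {x₀ x y : M} (hx : IsRoot φ x)
    (hy : y ∈ MulAction.orbit (unitaryStabilizer φ x₀) x) : IsRoot φ y := by
  obtain ⟨⟨g, hg, -⟩, rfl⟩ := hy
  exact (hg x x).trans hx

lemma apply_eq_of_mem_orbit {x₀ x y : M}
    (hy : y ∈ MulAction.orbit (unitaryStabilizer φ x₀) x) : φ y x₀ = φ x x₀ := by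
  obtain ⟨⟨g, hg, hg₀⟩, rfl⟩ := hy
  exact (congrArg (φ (g x)) hg₀).symm.trans (hg x x₀)

lemma IsPosDef.mem_orbit_of_sub_eq_θ_smul (hφ : IsPosDef φ) {x₀ x y z : M} (hx : IsRoot φ x)
    (hy : IsRoot φ y) (hxy : φ y x₀ = φ x x₀) (h : y - x = θ • z) :
    y ∈ MulAction.orbit (unitaryStabilizer φ x₀) x := by
  obtain ⟨f, hf, hfθ, rfl⟩ := hφ.eq_smul_of_sub_eq_θ_smul hx hy h
  have hf' : (f - 1) * φ x x₀ = 0 := by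
    rw [LinearMap.map_smul₂, smul_eq_mul] at hxy
    linear_combination hxy
  rcases mul_eq_zero.mp hf' with hf1 | hx₀
  · rw [sub_eq_zero.mp hf1, one_smul]
    exact MulAction.mem_orbit_self x
  · obtain ⟨e, he, rfl⟩ := exists_isTransvectionCoeff_of_mul_conj_eq_one hf hfθ
    have hx₀' : φ x₀ x = 0 := by rw [hφ.skew x x₀, hx₀, map_zero, neg_zero]
    convert hφ.add_smul_mem_orbit hx hx₀' he x using 1
    rw [show φ x x = -θ from hx]
    module

end SkewHermitian

section Symplectic

open Submodule

variable {K V : Type*} [Field K] [AddCommGroup V] [Module K V] {B : V →ₗ[K] V →ₗ[K] K}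

lemma exists_apply_eq_zero_and_apply_ne_zero (hB : B.SeparatingRight) {u v : V} (hv : v ∉ K ∙ u) :
    ∃ a, B a u = 0 ∧ B a v ≠ 0 := by
  contrapose! hv
  have hmem : B.flip v ∈ span K (Set.range fun _ : Unit => B.flip u) :=
    mem_span_of_iInf_ker_le_ker fun a ha => hv a (by simpa using ha)
  rw [Set.range_const, mem_span_singleton] at hmem
  obtain ⟨c, hc⟩ := hmem
  refine mem_span_singleton.mpr ⟨c, (sub_eq_zero.mp (hB _ fun a => ?_)).symm⟩
  rw [map_sub, map_smul, ← B.flip_apply a v, ← hc, LinearMap.smul_apply, LinearMap.flip_apply,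
    sub_self]

lemma exists_orthogonal_notMem_span (hV : 2 < Module.finrank K V) {u v : V} (h : B v u ≠ 0) :
    ∃ q, B q u = 0 ∧ q ∉ K ∙ u := by
  obtain ⟨y, hy⟩ : ∃ y, y ∉ span K {u, v} := by
    classical
    by_contra! htop
    have := finrank_span_finset_le_card (R := K) ({u, v} : Finset V)
    rw [Set.finrank, Finset.coe_pair, eq_top_iff'.mpr htop, finrank_top] at this
    exact absurd (this.trans Finset.card_le_two) hV.not_ge
  refine ⟨y - (B y u / B v u) • v, ?_, fun hq => hy ?_⟩
  · rw [LinearMap.map_sub₂, LinearMap.map_smul₂, smul_eq_mul, div_mul_cancel₀ _ h, sub_self]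
  · rw [← sub_add_cancel y ((B y u / B v u) • v)]
    exact add_mem (span_mono (by simp) hq) (smul_mem _ _ (subset_span (by simp)))

lemma exists_ne_and_ne (h2 : (2 : K) ≠ 0) (p q : K) : ∃ a, a ≠ p ∧ a ≠ q := by
  by_cases h : q = p + 1
  · refine ⟨p - 1, by simp, fun h' => h2 ?_⟩
    linear_combination -h - h'
  · exact ⟨p + 1, by simp, Ne.symm h⟩

/-- `w` is obtained from `v` by adding a vector that is orthogonal to `u`, not proportional to `u`,
and not orthogonal to `v`: a root in the class of `w - v` that is orthogonal to `u` gives a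
transvection fixing `u` and moving `v` into the class `w`. -/
structure IsLinked (B : V →ₗ[K] V →ₗ[K] K) (u v w : V) : Prop where
  apply_eq : B w u = B v u
  apply_ne_zero : B v w ≠ 0
  sub_notMem : w - v ∉ K ∙ u

lemma IsLinked.symm (hB : B.IsAlt) {u v w : V} (h : IsLinked B u v w) : IsLinked B u w v where
  apply_eq := h.apply_eq.symm
  apply_ne_zero := by rw [← hB.neg, neg_ne_zero]; exact h.apply_ne_zero
  sub_notMem := by rw [← neg_mem_iff, neg_sub]; exact h.sub_notMem

lemma isLinked_add_smul (hB : B.IsAlt) {u v w : V} {a : K} (hw : B w u = B v u)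
    (hmem : w - v ∉ K ∙ u) (ha : B v w + a * B v u ≠ 0) : IsLinked B u v (w + a • u) where
  apply_eq := by rw [LinearMap.map_add₂, LinearMap.map_smul₂, hB u, smul_zero, add_zero, hw]
  apply_ne_zero := by rwa [map_add, map_smul, smul_eq_mul]
  sub_notMem := by
    rwa [add_sub_right_comm, add_mem_cancel_right (smul_mem _ a (mem_span_singleton_self u))]

lemma exists_isLinked_of_apply_eq_zero (hB : B.IsAlt) (hB' : B.SeparatingRight) {u v v' : V}
    (hv : v ∉ K ∙ u) (hv' : v' ∉ K ∙ u) (h : B v u = 0) (h' : B v' u = 0) :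
    ∃ w, IsLinked B u v w ∧ IsLinked B u v' w := by
  obtain ⟨w, hw, hwv, hwv'⟩ : ∃ w, B w u = 0 ∧ B w v ≠ 0 ∧ B w v' ≠ 0 := by
    obtain ⟨a, hau, hav⟩ := exists_apply_eq_zero_and_apply_ne_zero hB' hv
    obtain ⟨b, hbu, hbv'⟩ := exists_apply_eq_zero_and_apply_ne_zero hB' hv'
    by_cases hav' : B a v' = 0
    · by_cases hbv : B b v = 0
      · exact ⟨a + b, by simp [hau, hbu], by simp [hav, hbv], by simp [hav', hbv']⟩
      · exact ⟨b, hbu, hbv, hbv'⟩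
    · exact ⟨a, hau, hav, hav'⟩
  have hlinked {v : V} (h : B v u = 0) (hwv : B w v ≠ 0) : IsLinked B u w v := by
    refine ⟨h.trans hw.symm, hwv, fun hmem => hwv ?_⟩
    obtain ⟨c, hc⟩ := mem_span_singleton.mp hmem
    rw [← sub_add_cancel v w, ← hc, map_add, hB w, map_smul, hw, smul_zero, add_zero]
  exact ⟨w, (hlinked h hwv).symm hB, (hlinked h' hwv').symm hB⟩

lemma exists_isLinked_of_apply_ne_zero (hB : B.IsAlt) (h2 : (2 : K) ≠ 0)
    (hV : 2 < Module.finrank K V) {u v v' : V} (h : B v u ≠ 0) (h' : B v' u = B v u) :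
    ∃ w, IsLinked B u v w ∧ IsLinked B u v' w := by
  obtain ⟨w, hw, hwv, hwv'⟩ : ∃ w, B w u = B v u ∧ w - v ∉ K ∙ u ∧ w - v' ∉ K ∙ u := by
    by_cases hvv' : v' - v ∈ K ∙ u
    · obtain ⟨q, hqu, hq⟩ := exists_orthogonal_notMem_span hV h
      refine ⟨v + q, by rw [LinearMap.map_add₂, hqu, add_zero], by rwa [add_sub_cancel_left], ?_⟩
      rwa [add_sub_right_comm, ← neg_sub v', add_mem_cancel_left (neg_mem hvv')]
    · rw [← neg_mem_iff, neg_sub] at hvv'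
      refine ⟨v + (v - v'), ?_, by rwa [add_sub_cancel_left], ?_⟩
      · rw [LinearMap.map_add₂, LinearMap.map_sub₂, h', sub_self, add_zero]
      · rwa [add_sub_right_comm, ← two_smul K, smul_mem_iff _ h2]
  obtain ⟨a, hav, hav'⟩ := exists_ne_and_ne h2 (-B v w / B v u) (-B v' w / B v u)
  have hlinked {x : V} (hx : B x u = B v u) (hmem : w - x ∉ K ∙ u)
      (ha : a ≠ -B x w / B v u) : IsLinked B u x (w + a • u) :=
    isLinked_add_smul hB (hw.trans hx.symm) hmem <| by
      rw [Ne, eq_div_iff h] at ha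
      rwa [hx, add_comm, Ne, add_eq_zero_iff_eq_neg]
  exact ⟨w + a • u, hlinked rfl hwv hav, hlinked h' hwv' hav'⟩

lemma exists_isLinked (hB : B.IsAlt) (hB' : B.SeparatingRight) (h2 : (2 : K) ≠ 0)
    (hV : 2 < Module.finrank K V) {u v v' : V} (hv : v ∉ K ∙ u) (hv' : v' ∉ K ∙ u)
    (h : B v' u = B v u) : ∃ w, IsLinked B u v w ∧ IsLinked B u v' w := by
  by_cases h0 : B v u = 0
  · exact exists_isLinked_of_apply_eq_zero hB hB' hv hv' h0 (h.trans h0)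
  · exact exists_isLinked_of_apply_ne_zero hB h2 hV h0 h

end Symplectic

section Transitivity

variable {M V : Type*} [AddCommGroup M] [Module O M] [AddCommGroup V] [Module (ZMod 3) V]
  {φ : M →ₗ[O] M →ₛₗ[conj] O} {cls : M →ₛₗ[red] V} {B : V →ₗ[ZMod 3] V →ₗ[ZMod 3] ZMod 3}
  {x₀ x x' : M}

/-- `cls` exhibits the symplectic space `(V, B)` over `𝔽₃` as the reduction of `(M, φ)` modulo `θ`,
and every nonzero class contains a root. -/
structure IsReduction (φ : M →ₗ[O] M →ₛₗ[conj] O) (cls : M →ₛₗ[red] V)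
    (B : V →ₗ[ZMod 3] V →ₗ[ZMod 3] ZMod 3) : Prop where
  isAlt : B.IsAlt
  separatingRight : B.SeparatingRight
  red_apply : ∀ x y, red (φ x y) = B (cls x) (cls y)
  exists_eq_θ_smul : ∀ x, cls x = 0 → ∃ z, x = θ • z
  exists_isRoot : ∀ v ≠ 0, ∃ t, IsRoot φ t ∧ cls t = v

namespace IsReduction

lemma mem_orbit_of_cls_eq (h : IsReduction φ cls B) (hφ : IsPosDef φ) (hx : IsRoot φ x)
    (hx' : IsRoot φ x') (hxx' : φ x' x₀ = φ x x₀) (hcls : cls x' = cls x) :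
    x' ∈ MulAction.orbit (unitaryStabilizer φ x₀) x := by
  obtain ⟨z, hz⟩ := h.exists_eq_θ_smul (x' - x) (by rw [map_sub, hcls, sub_self])
  exact hφ.mem_orbit_of_sub_eq_θ_smul hx hx' hxx' hz

lemma exists_eq_smul_of_cls_mem_span (h : IsReduction φ cls B) (hφ : IsPosDef φ)
    (hx₀ : IsRoot φ x₀) (hx : IsRoot φ x) (hmem : cls x ∈ ZMod 3 ∙ cls x₀) :
    ∃ f : O, x = f • x₀ := by
  obtain ⟨c, hc⟩ := Submodule.mem_span_singleton.mp hmem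
  have hc0 : c ≠ 0 := by
    rintro rfl
    obtain ⟨z, hz⟩ := h.exists_eq_θ_smul x (by rw [← hc, zero_smul])
    exact hx.ne_θ_smul z hz
  obtain ⟨u, hu, huc⟩ : ∃ u : O, u * conj u = 1 ∧ red u = c := by
    have hcases : ∀ c : ZMod 3, c ≠ 0 → c = 1 ∨ c = -1 := by decide
    rcases hcases c hc0 with rfl | rfl
    · exact ⟨1, by simp, by simp⟩
    · exact ⟨-1, by simp, by simp⟩
  have hux₀ : IsRoot φ (u • x₀) := by
    rw [IsRoot, LinearMap.map_smul₂, LinearMap.map_smulₛₗ, hx₀, smul_smul, hu, one_smul]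
  obtain ⟨z, hz⟩ := h.exists_eq_θ_smul (x - u • x₀) <| by
    rw [map_sub, LinearMap.map_smulₛₗ, huc, hc, sub_self]
  obtain ⟨f, -, -, rfl⟩ := hφ.eq_smul_of_sub_eq_θ_smul hux₀ hx hz
  exact ⟨f * u, smul_smul f u x₀⟩

lemma exists_mem_orbit_cls_eq (h : IsReduction φ cls B) (hφ : IsPosDef φ) (hx₀ : IsRoot φ x₀)
    {w : V} (hw : IsLinked B (cls x₀) (cls x) w) :
    ∃ y ∈ MulAction.orbit (unitaryStabilizer φ x₀) x, cls y = w := by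
  obtain ⟨t, ht, htw⟩ := h.exists_isRoot (w - cls x) fun h0 =>
    hw.sub_notMem (h0 ▸ zero_mem _)
  have htx₀ : φ t x₀ = 0 := by
    have hdvd : θ ∣ φ t x₀ := by
      rw [← red_eq_zero_iff, h.red_apply, htw, LinearMap.map_sub₂, hw.apply_eq, sub_self]
    refine (hφ.eq_zero_or_eq_smul ht hx₀ hdvd).resolve_right ?_
    rintro ⟨f, -, rfl⟩
    refine hw.sub_notMem (Submodule.mem_span_singleton.mpr ⟨red f, ?_⟩)
    rw [← htw, LinearMap.map_smulₛₗ]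
  obtain ⟨e, he, hew⟩ := exists_isTransvectionCoeff (B (cls x) w)⁻¹
  refine ⟨_, hφ.add_smul_mem_orbit ht (by rw [hφ.skew t x₀, htx₀, map_zero, neg_zero]) he x, ?_⟩
  rw [map_add, LinearMap.map_smulₛₗ, map_mul, hew, h.red_apply, htw, map_sub, h.isAlt (cls x),
    sub_zero, inv_mul_cancel₀ hw.apply_ne_zero, one_smul, add_sub_cancel]

end IsReduction

lemma IsPosDef.eq_of_apply_smul_eq (hφ : IsPosDef φ) (hx : IsRoot φ x) (hx' : IsRoot φ x')
    {f : O} (hf : x = f • x₀) (h : φ x' x₀ = φ x x₀) : x' = x := by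
  have hx'x : φ x' x = -θ := by
    rw [← show φ x x = -θ from hx]
    conv_lhs => rw [hf, LinearMap.map_smulₛₗ, h, ← LinearMap.map_smulₛₗ, ← hf]
  have hxx' : φ x x' = -θ := by rw [hφ.skew x' x, hx'x, map_neg, conj_θ, neg_neg]
  by_contra hne
  obtain ⟨n, hn, hn'⟩ := hφ.pos (x' - x) (sub_ne_zero.mpr hne)
  rw [LinearMap.map_sub₂, map_sub, map_sub, hx'x, hxx', hx, hx', sub_self, eq_comm,
    mul_eq_zero, or_iff_right (neg_ne_zero.mpr θ_ne_zero), Int.cast_eq_zero] at hn'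
  exact hn.ne' hn'

theorem IsReduction.mem_orbit_of_apply_eq (h : IsReduction φ cls B) (hφ : IsPosDef φ)
    (hV : 2 < Module.finrank (ZMod 3) V) (hx₀ : IsRoot φ x₀) (hx : IsRoot φ x)
    (hx' : IsRoot φ x') (hxx' : φ x' x₀ = φ x x₀) :
    x' ∈ MulAction.orbit (unitaryStabilizer φ x₀) x := by
  by_cases hmem : cls x ∈ ZMod 3 ∙ cls x₀
  · obtain ⟨f, hf⟩ := h.exists_eq_smul_of_cls_mem_span hφ hx₀ hx hmem
    rw [hφ.eq_of_apply_smul_eq hx hx' hf hxx']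
    exact MulAction.mem_orbit_self x
  by_cases hmem' : cls x' ∈ ZMod 3 ∙ cls x₀
  · obtain ⟨f, hf⟩ := h.exists_eq_smul_of_cls_mem_span hφ hx₀ hx' hmem'
    rw [hφ.eq_of_apply_smul_eq hx' hx hf hxx'.symm]
    exact MulAction.mem_orbit_self x'
  obtain ⟨w, hw, hw'⟩ := exists_isLinked h.isAlt h.separatingRight (by decide) hV hmem hmem'
    (by rw [← h.red_apply, ← h.red_apply, hxx'])
  obtain ⟨y, hy, hyw⟩ := h.exists_mem_orbit_cls_eq hφ hx₀ hw
  obtain ⟨y', hy', hyw'⟩ := h.exists_mem_orbit_cls_eq hφ hx₀ hw'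
  have hyy' : y' ∈ MulAction.orbit (unitaryStabilizer φ x₀) y :=
    h.mem_orbit_of_cls_eq hφ (hx.of_mem_orbit hy) (hx'.of_mem_orbit hy')
      (by rw [apply_eq_of_mem_orbit hy, apply_eq_of_mem_orbit hy', hxx']) (hyw'.trans hyw.symm)
  rw [← MulAction.orbit_eq_iff] at hy hy' hyy' ⊢
  exact hy'.symm.trans (hyy'.trans hy)

end Transitivity

section SkewForm

/-- The Gram matrix of `Λᵏ` divided by `θ`. -/
def skewGram (k : ℕ) : Matrix (Fin k) (Fin k) O := fun i j =>
  if i = j then -θ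
  else if (i : ℕ) + 1 = (j : ℕ) then 1
  else if (j : ℕ) + 1 = (i : ℕ) then -1
  else 0

lemma gram_eq (k : ℕ) (i j : Fin k) : gram k i j = θ * skewGram k i j := by
  unfold gram skewGram
  split_ifs
  · linear_combination θ_mul_θ
  · rw [mul_one]
  · rw [conj_θ, mul_neg_one]
  · rw [mul_zero]

/-- The skew-Hermitian form `ψ / θ` on `Λᵏ`. -/
def skewForm (k : ℕ) : (Fin k → O) →ₗ[O] (Fin k → O) →ₛₗ[conj] O :=
  Matrix.toLinearMapₛₗ₂' O (RingHom.id O) conj (skewGram k)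

lemma psi_eq (k : ℕ) (x y : Fin k → O) : psi k x y = θ * skewForm k x y := by
  rw [psi, skewForm, Matrix.toLinearMapₛₗ₂'_apply, Finset.mul_sum]
  refine Finset.sum_congr rfl fun i _ => ?_
  rw [Finset.mul_sum]
  refine Finset.sum_congr rfl fun j _ => ?_
  rw [gram_eq, RingHom.id_apply, smul_eq_mul, smul_eq_mul]
  ring

lemma psi_eq_three_iff {k : ℕ} {x : Fin k → O} : psi k x x = 3 ↔ IsRoot (skewForm k) x := by
  rw [psi_eq, IsRoot, ← mul_right_inj' (c := -θ) θ_ne_zero, mul_neg, θ_mul_θ, neg_neg]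

lemma isRoot_single (k : ℕ) (i : Fin k) : IsRoot (skewForm k) (Pi.single i 1) := by
  rw [IsRoot, skewForm, Matrix.toLinearMapₛₗ₂'_single]
  simp [skewGram]

lemma skewGram_four :
    skewGram 4 = !![-θ, 1, 0, 0; -1, -θ, 1, 0; 0, -1, -θ, 1; 0, 0, -1, -θ] := by
  ext i j
  fin_cases i <;> fin_cases j <;> rfl

lemma skewForm_four_apply (x y : Fin 4 → O) :
    skewForm 4 x y =
      -θ * (x 0 * conj (y 0) + x 1 * conj (y 1) + x 2 * conj (y 2) + x 3 * conj (y 3))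
      + (x 0 * conj (y 1) - x 1 * conj (y 0)) + (x 1 * conj (y 2) - x 2 * conj (y 1))
      + (x 2 * conj (y 3) - x 3 * conj (y 2)) := by
  simp only [skewForm, Matrix.toLinearMapₛₗ₂'_apply, skewGram_four, Fin.sum_univ_four,
    RingHom.id_apply, smul_eq_mul, Matrix.of_apply, Matrix.cons_val]
  ring

-- The squared length of the image of `x` under the isometric embedding of `Λ⁴` in `𝒪⁴` that sends
-- the basis to `(θ, 0, 0, 0)`, `(1, 1, 1, 0)`, `(0, -θ, 0, 0)`, `(0, -1, 1, 1)`.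
lemma θ_mul_skewForm_four_self (x : Fin 4 → O) :
    θ * skewForm 4 x x = ((norm (θ * x 0 + x 1) + norm (x 1 - θ * x 2 - x 3) + norm (x 1 + x 3) +
      norm (x 3) : ℤ) : O) := by
  push_cast
  simp only [← mul_conj, skewForm_four_apply, map_add, map_sub, map_mul, conj_θ]
  linear_combination (-(x 1 * conj (x 1)) - x 3 * conj (x 3)) * θ_mul_θ

lemma exists_pos_θ_mul_skewForm_four_self {x : Fin 4 → O} (hx : x ≠ 0) :
    ∃ m : ℤ, θ * skewForm 4 x x = m ∧ 0 < m := by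
  refine ⟨_, θ_mul_skewForm_four_self x, ?_⟩
  contrapose! hx
  have h₁ := norm_nonneg (θ * x 0 + x 1)
  have h₂ := norm_nonneg (x 1 - θ * x 2 - x 3)
  have h₃ := norm_nonneg (x 1 + x 3)
  have h₄ := norm_nonneg (x 3)
  have h₀₁ : θ * x 0 + x 1 = 0 := norm_eq_zero.mp (by linarith)
  have h₁₂₃ : x 1 - θ * x 2 - x 3 = 0 := norm_eq_zero.mp (by linarith)
  have h₁₃ : x 1 + x 3 = 0 := norm_eq_zero.mp (by linarith)
  have hx3 : x 3 = 0 := norm_eq_zero.mp (by linarith)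
  have hx1 : x 1 = 0 := by simpa only [hx3, add_zero] using h₁₃
  have hx2 : x 2 = 0 := by simpa [hx1, hx3, θ_ne_zero] using h₁₂₃
  have hx0 : x 0 = 0 := by simpa [hx1, θ_ne_zero] using h₀₁
  ext i
  fin_cases i <;> assumption

lemma isPosDef_skewForm_four : IsPosDef (skewForm 4) where
  skew x y := by
    simp only [skewForm_four_apply, map_add, map_sub, map_mul, map_neg, conj_θ, conj_conj]
    ring
  pos x hx := by
    obtain ⟨m, hm, hm0⟩ := exists_pos_θ_mul_skewForm_four_self hx
    obtain ⟨n, rfl⟩ : (3 : ℤ) ∣ m := by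
      refine (ZMod.intCast_zmod_eq_zero_iff_dvd m 3).mp ?_
      rw [← map_intCast red, ← hm, map_mul, red_θ, zero_mul]
    refine ⟨n, by omega, mul_left_cancel₀ θ_ne_zero ?_⟩
    rw [hm]
    push_cast
    linear_combination n * θ_mul_θ

/-- Coordinatewise reduction modulo `θ`. -/
def redVec (k : ℕ) : (Fin k → O) →ₛₗ[red] (Fin k → ZMod 3) where
  toFun x i := red (x i)
  map_add' x y := funext fun i => map_add red (x i) (y i)
  map_smul' a x := funext fun i => map_mul red a (x i)

/-- The reduction of `skewForm k` modulo `θ`. -/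
def redForm (k : ℕ) : (Fin k → ZMod 3) →ₗ[ZMod 3] (Fin k → ZMod 3) →ₗ[ZMod 3] ZMod 3 :=
  Matrix.toLinearMap₂' (ZMod 3) ((skewGram k).map red)

lemma red_skewForm (k : ℕ) (x y : Fin k → O) :
    red (skewForm k x y) = redForm k (redVec k x) (redVec k y) := by
  simp [skewForm, redForm, redVec, Matrix.toLinearMapₛₗ₂'_apply, Matrix.toLinearMap₂'_apply,
    red_conj]

lemma exists_eq_θ_smul_of_redVec_eq_zero {k : ℕ} {x : Fin k → O} (hx : redVec k x = 0) :
    ∃ z, x = θ • z := by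
  choose z hz using fun i => red_eq_zero_iff.mp (congrFun hx i)
  exact ⟨z, funext hz⟩

lemma redForm_four_apply (v w : Fin 4 → ZMod 3) :
    redForm 4 v w =
      (v 0 * w 1 - v 1 * w 0) + (v 1 * w 2 - v 2 * w 1) + (v 2 * w 3 - v 3 * w 2) := by
  simp only [redForm, Matrix.toLinearMap₂'_apply, skewGram_four, Fin.sum_univ_four, smul_eq_mul,
    Matrix.map_apply, Matrix.of_apply, Matrix.cons_val, map_neg, map_zero, map_one, red_θ]
  ring

end SkewForm

section Classes

lemma mem_of_transvections {K : Type*} [Field K] (h2 : (2 : K) ≠ 0) {S : Set (Fin 4 → K)}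
    (hS : ![1, 0, 0, 0] ∈ S)
    (h₀ : ∀ {a b c d} a', ![a, b, c, d] ∈ S → b ≠ 0 → ![a', b, c, d] ∈ S)
    (h₁ : ∀ {a b c d} b', ![a, b, c, d] ∈ S → a ≠ c → ![a, b', c, d] ∈ S)
    (h₂ : ∀ {a b c d} c', ![a, b, c, d] ∈ S → b ≠ d → ![a, b, c', d] ∈ S)
    (h₃ : ∀ {a b c d} d', ![a, b, c, d] ∈ S → c ≠ 0 → ![a, b, c, d'] ∈ S)
    {v : Fin 4 → K} (hv : v ≠ 0) : v ∈ S := by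
  have hbc {b c : K} (hb : b ≠ 0) (hc : c ≠ 0) (a d : K) : ![a, b, c, d] ∈ S :=
    h₃ d (h₂ c (h₀ a (h₁ b hS one_ne_zero) hb) hb) hc
  have hbd {b d : K} (hb : b ≠ 0) (hbd : b ≠ d) (a c : K) : ![a, b, c, d] ∈ S :=
    h₂ c (hbc hb one_ne_zero a d) hbd
  have hb {b : K} (hb : b ≠ 0) (a c d : K) : ![a, b, c, d] ∈ S := by
    rcases eq_or_ne c 0 with rfl | hc
    · have hbb : -b ≠ b := fun h => mul_ne_zero h2 hb (by linear_combination -h)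
      rcases eq_or_ne b d with rfl | hd
      · exact h₀ a (h₁ b (hbd (neg_ne_zero.mpr hb) hbb 1 0) one_ne_zero) hb
      · exact hbd hb hd a 0
    · exact hbc hb hc a d
  have hac {a c : K} (hac : a ≠ c) (b d : K) : ![a, b, c, d] ∈ S :=
    h₁ b (hb one_ne_zero a c d) hac
  have hd {d : K} (hd : d ≠ 0) (a b c : K) : ![a, b, c, d] ∈ S := by
    rcases eq_or_ne b d with rfl | hbd
    · exact hb hd a c b
    · exact h₂ c (hac (c := a + 1) (by simp) b d) hbd
  obtain ⟨a, b, c, d, rfl⟩ : ∃ a b c d, v = ![a, b, c, d] :=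
    ⟨v 0, v 1, v 2, v 3, by ext i; fin_cases i <;> rfl⟩
  by_cases hc0 : c = 0
  · by_cases ha0 : a = c
    · by_cases hb0 : b = 0
      · exact hd (fun hd0 => hv (by simp [ha0, hc0, hb0, hd0])) a b c
      · exact hb hb0 a c d
    · exact hac ha0 b d
  · exact h₃ d (hd one_ne_zero a b c) hc0

/-- The classes modulo `θ` of the roots of `Λ⁴`. -/
def rootClasses : Set (Fin 4 → ZMod 3) := redVec 4 '' {t | IsRoot (skewForm 4) t}

lemma redVec_single (k : ℕ) (i : Fin k) : redVec k (Pi.single i 1) = Pi.single i 1 := by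
  ext j
  simp [redVec, Pi.single_apply, apply_ite red]

lemma mem_rootClasses_of_forall_ne {v v' : Fin 4 → ZMod 3} (hv : v ∈ rootClasses) (i : Fin 4)
    (hvi : redForm 4 v (Pi.single i 1) ≠ 0) (h : ∀ j ≠ i, v' j = v j) : v' ∈ rootClasses := by
  obtain ⟨x, hx, rfl⟩ := hv
  obtain ⟨e, he, hei⟩ := exists_isTransvectionCoeff
    ((v' i - redVec 4 x i) / redForm 4 (redVec 4 x) (Pi.single i 1))
  have hy := isPosDef_skewForm_four.add_smul_mem_orbit (isRoot_single 4 i)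
    (LinearMap.map_zero₂ _ _) he x
  refine ⟨_, IsRoot.of_mem_orbit hx hy, ?_⟩
  rw [map_add, LinearMap.map_smulₛₗ, map_mul, hei, red_skewForm, redVec_single,
    div_mul_cancel₀ _ hvi]
  ext j
  rcases eq_or_ne j i with rfl | hj
  · simp
  · simp [hj, h j hj]

lemma mem_rootClasses {v : Fin 4 → ZMod 3} (hv : v ≠ 0) : v ∈ rootClasses := by
  refine mem_of_transvections (by decide) ?_ ?_ ?_ ?_ ?_ hv
  · refine ⟨Pi.single 0 1, isRoot_single 4 0, ?_⟩
    rw [redVec_single]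
    decide
  · intro a b c d a' h hb
    refine mem_rootClasses_of_forall_ne h 0 ?_ (by simp [Fin.forall_fin_succ])
    simpa [redForm_four_apply] using hb
  · intro a b c d b' h hac
    refine mem_rootClasses_of_forall_ne h 1 ?_ (by simp [Fin.forall_fin_succ])
    simpa [redForm_four_apply, ← sub_eq_add_neg, sub_eq_zero] using hac
  · intro a b c d c' h hbd
    refine mem_rootClasses_of_forall_ne h 2 ?_ (by simp [Fin.forall_fin_succ])
    simpa [redForm_four_apply, ← sub_eq_add_neg, sub_eq_zero] using hbd
  · intro a b c d d' h hc
    refine mem_rootClasses_of_forall_ne h 3 ?_ (by simp [Fin.forall_fin_succ])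
    simpa [redForm_four_apply] using hc

lemma redForm_four_separatingRight : (redForm 4).SeparatingRight := by
  intro w hw
  simp only [redForm_four_apply] at hw
  have h₁ : w 1 = 0 := by simpa using hw ![1, 0, 0, 0]
  have h₂ : w 2 = 0 := by simpa using hw ![0, 0, 0, 1]
  have h₀ : w 0 = 0 := by simpa [h₂] using hw ![0, 1, 0, 0]
  have h₃ : w 3 = 0 := by simpa [h₁] using hw ![0, 0, 1, 0]
  ext i
  fin_cases i <;> assumption

lemma isReduction_skewForm_four : IsReduction (skewForm 4) (redVec 4) (redForm 4) where
  isAlt v := by rw [redForm_four_apply]; ring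
  separatingRight := redForm_four_separatingRight
  red_apply := red_skewForm 4
  exists_eq_θ_smul _ := exists_eq_θ_smul_of_redVec_eq_zero
  exists_isRoot _ := mem_rootClasses

end Classes

end EisensteinLattice

open EisensteinLattice

/-- Let `x₀` be a 3-vector of `Λ⁴` and `U(Λ⁴)_{x₀}` its stabilizer.  For
every `c ∈ 𝒪`, the group `U(Λ⁴)_{x₀}` acts transitively on the set of 3-vectors `x`
with `ψ(x, x₀) = c`. -/
theorem statement6 (x₀ : Fin 4 → O) (hx₀ : psi 4 x₀ x₀ = 3) (c : O)
    (x x' : Fin 4 → O)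
    (hx : psi 4 x x = 3) (hxc : psi 4 x x₀ = c)
    (hx' : psi 4 x' x' = 3) (hxc' : psi 4 x' x₀ = c) :
    ∃ g : (Fin 4 → O) ≃ₗ[O] (Fin 4 → O), IsUnitary 4 g ∧ g x₀ = x₀ ∧ g x = x' := by
  have h := isReduction_skewForm_four.mem_orbit_of_apply_eq isPosDef_skewForm_four (by simp)
    (psi_eq_three_iff.mp hx₀) (psi_eq_three_iff.mp hx) (psi_eq_three_iff.mp hx')
    (mul_left_cancel₀ θ_ne_zero (by rw [← psi_eq, ← psi_eq, hxc', hxc]))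
  obtain ⟨⟨g, hg, hgx₀⟩, hgx⟩ := h
  exact ⟨g, fun y z => by rw [psi_eq, psi_eq, hg], hgx₀, hgx⟩

end
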